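/- arXiv:1707.08412 — 2 statements merged into one kernel-verified Lean document; each statement's English description precedes it below -/
import Mathlib

section
/- Let K be a field of characteristic zero, let q : ĝ → g be a surjective homomorphism of Lie algebras over K with kernel n, and let V be a g-module, regarded as a ĝ-module via x·v := q(x)·v. Let σ : g → ĝ be a linear section of q, p ∈ ℕ, and let f : n^p → V be a symmetric ĝ-invariant p-linear map. Then the alternating 2p-linear map f_σ is a Chevalley–Eilenberg cocycle: d_g f_σ = 0. -/
open scoped BigOperators

/-- The Chevalley–Eilenberg differential on `V`-valued cochains of a Lie algebra `g`
acting on a module `V`. -/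
def ceDiff {g V : Type*} [LieRing g] [AddCommGroup V] [LieRingModule g V]
    (p : ℕ) (ω : (Fin p → g) → V) : (Fin (p + 1) → g) → V :=
  fun x =>
    (∑ j : Fin (p + 1), ((-1 : ℤ) ^ (j : ℕ)) • ⁅x j, ω (x ∘ j.succAbove)⁆)
      + ∑ j : Fin (p + 1), ∑ i : Fin (p + 1),
          if (i : ℕ) < (j : ℕ) then
            ((-1 : ℤ) ^ ((i : ℕ) + (j : ℕ))) •
              ω (fun k : Fin p =>
                if (k : ℕ) = 0 then ⁅x i, x j⁆
                else
                  x ⟨if (k : ℕ) - 1 < (i : ℕ) then (k : ℕ) - 1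
                     else if (k : ℕ) < (j : ℕ) then (k : ℕ) else (k : ℕ) + 1,
                     by have := k.isLt; split_ifs <;> omega⟩)
          else 0

/-- The curvature `R_σ(x,y) = ⁅σ x, σ y⁆ - σ ⁅x,y⁆` of a linear section `σ` of a surjective
Lie algebra morphism `π : gh → g`, as an element of the kernel `n = ker π`. -/
def curvKer {K g gh : Type*} [Field K] [LieRing g] [LieAlgebra K g]
    [LieRing gh] [LieAlgebra K gh]
    (π : gh →ₗ⁅K⁆ g) (σ : g →ₗ[K] gh) (hσ : ∀ x, π (σ x) = x) (x y : g) :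
    π.ker :=
  ⟨⁅σ x, σ y⁆ - σ ⁅x, y⁆, by
    rw [LieHom.mem_ker]
    simp [hσ]⟩

/-- The Chern–Weil cochain `f_σ (x₁,…,x_{2p}) = 2^{-p} Σ_{τ ∈ S_{2p}} sgn(τ)
f(R(x_{τ(1)},x_{τ(2)}),…,R(x_{τ(2p-1)},x_{τ(2p)}))` attached to an invariant symmetric
`p`-linear map `f : n^p → V` and a linear section `σ`.  The arity `a` is passed along
with a proof `a = 2*p`. -/
noncomputable def chernWeil {K g gh V : Type*} [Field K] [LieRing g] [LieAlgebra K g]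
    [LieRing gh] [LieAlgebra K gh] [AddCommGroup V] [Module K V]
    (π : gh →ₗ⁅K⁆ g) (p a : ℕ) (ha : a = 2 * p)
    (σ : g →ₗ[K] gh) (hσ : ∀ x, π (σ x) = x)
    (f : MultilinearMap K (fun _ : Fin p => π.ker) V) :
    (Fin a → g) → V :=
  fun x => ((2 : K) ^ p)⁻¹ •
    ∑ τ : Equiv.Perm (Fin a),
      ((Equiv.Perm.sign τ : ℤ)) •
        f (fun s : Fin p =>
          curvKer π σ hσ
            (x (τ ⟨2 * (s : ℕ), by have := s.isLt; omega⟩))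
            (x (τ ⟨2 * (s : ℕ) + 1, by have := s.isLt; omega⟩)))

def altSum {g V : Type*} [AddCommGroup V] (n : ℕ) (Φ : (Fin n → g) → V) (x : Fin n → g) : V :=
  ∑ τ : Equiv.Perm (Fin n), ((Equiv.Perm.sign τ : ℤ)) • Φ (x ∘ τ)

lemma altSum_perm {g V : Type*} [AddCommGroup V] {n : ℕ} (Φ : (Fin n → g) → V) (x : Fin n → g)
    (ρ : Equiv.Perm (Fin n)) :
    altSum n (fun y => Φ (y ∘ ρ)) x = (Equiv.Perm.sign ρ : ℤ) • altSum n Φ x := by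
  unfold altSum
  rw [Finset.smul_sum]
  refine Fintype.sum_equiv (Equiv.mulRight ρ) _ _ fun τ => ?_
  simp only [Equiv.coe_mulRight, Equiv.Perm.sign_mul, smul_smul, Equiv.Perm.coe_mul]
  congr 1
  rcases Int.units_eq_one_or (Equiv.Perm.sign ρ) with h | h <;> simp [h]

def extP {n : ℕ} (e : Equiv.Perm (Fin n)) : Equiv.Perm (Fin (n+1)) :=
  Equiv.Perm.decomposeFin.symm (0, e)

lemma extP_zero {n : ℕ} (e : Equiv.Perm (Fin n)) : extP e 0 = 0 := by simp [extP]
lemma extP_succ {n : ℕ} (e : Equiv.Perm (Fin n)) (k : Fin n) : extP e k.succ = (e k).succ := by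
  simp [extP]
lemma extP_sign {n : ℕ} (e : Equiv.Perm (Fin n)) :
    Equiv.Perm.sign (extP e) = Equiv.Perm.sign e := by simp [extP]

noncomputable def decP (n : ℕ) : Fin (n+1) × Equiv.Perm (Fin n) ≃ Equiv.Perm (Fin (n+1)) :=
  Equiv.ofBijective (fun a => (Fin.cycleRange a.1)⁻¹ * extP a.2) (by
    rw [Fintype.bijective_iff_injective_and_card]
    constructor
    · rintro ⟨i, e⟩ ⟨j, e'⟩ h
      simp only at h
      have h0 : i = j := by
        have := congrArg (fun t => t 0) h
        simpa [extP_zero, Equiv.Perm.inv_def, Fin.cycleRange_symm_zero] using this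
      subst h0
      have h1 := mul_left_cancel h
      have : e = e' := by
        ext k
        have := congrArg (fun t => t k.succ) h1
        simp only [extP_succ] at this
        rw [Fin.succ_injective _ this]
      rw [this]
    · simp [Fintype.card_perm, Nat.factorial_succ])

lemma decP_zero {n : ℕ} (i e) : decP n (i, e) 0 = i := by
  simp [decP, extP_zero, Equiv.Perm.inv_def, Fin.cycleRange_symm_zero]
lemma decP_succ {n : ℕ} (i e k) : decP n (i, e) (Fin.succ k) = i.succAbove (e k) := by
  simp [decP, extP_succ, Equiv.Perm.inv_def, Fin.cycleRange_symm_succ]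
lemma decP_sign {n : ℕ} (i e) : (Equiv.Perm.sign (decP n (i, e)) : ℤ) = 
    (-1) ^ (i : ℕ) * (Equiv.Perm.sign e : ℤ) := by
  simp [decP, extP_sign, Fin.sign_cycleRange]

lemma altSum_succ {g V : Type*} [AddCommGroup V] {n : ℕ} (Φ : (Fin (n+1) → g) → V)
    (x : Fin (n+1) → g) :
    altSum (n+1) Φ x = ∑ j : Fin (n+1), ((-1 : ℤ) ^ (j : ℕ)) •
      altSum n (fun y => Φ (Fin.cons (x j) y)) (x ∘ j.succAbove) := by
  unfold altSum
  rw [← (decP n).sum_comp, Fintype.sum_prod_type]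
  refine Finset.sum_congr rfl fun i _ => ?_
  rw [Finset.smul_sum]
  refine Finset.sum_congr rfl fun e _ => ?_
  rw [decP_sign, mul_smul]
  congr 3
  funext k
  refine Fin.cases ?_ (fun k => ?_) k
  · simp [decP_zero]
  · simp [decP_succ]

lemma altSum_cons {g V : Type*} [AddCommGroup V] {n : ℕ} (Φ : (Fin (n+1) → g) → V)
    (a : g) (z : Fin n → g) :
    altSum (n+1) Φ (Fin.cons a z) = ∑ k : Fin (n+1), ((-1 : ℤ) ^ (k : ℕ)) •
      altSum n (fun y => Φ (k.insertNth a y)) z := by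
  unfold altSum
  rw [← _root_.Equiv.sum_comp (Equiv.inv (Equiv.Perm (Fin (n+1)))), ← (decP n).sum_comp, Fintype.sum_prod_type]
  refine Finset.sum_congr rfl fun i _ => ?_
  rw [Finset.smul_sum, ← _root_.Equiv.sum_comp (Equiv.inv (Equiv.Perm (Fin n)))]
  refine Finset.sum_congr rfl fun e _ => ?_
  simp only [Equiv.inv_apply, Equiv.Perm.sign_inv]
  rw [decP_sign, mul_smul]
  congr 3
  · exact Equiv.Perm.sign_inv e
  symm
  rw [Fin.insertNth_eq_iff]
  constructor
  · simp only [Function.comp]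
    rw [show (decP n (i, e⁻¹))⁻¹ i = 0 by rw [Equiv.Perm.inv_eq_iff_eq, decP_zero]]
    simp
  · funext k
    simp only [Function.comp, Fin.removeNth]
    rw [show (decP n (i, e⁻¹))⁻¹ (i.succAbove k) = (e k).succ by 
      rw [Equiv.Perm.inv_eq_iff_eq, decP_succ]; simp]
    simp

/-- remaining entries -/
def rest2 {g : Type*} {n : ℕ} (x : Fin (n+2) → g) (i j : Fin (n+2)) : Fin n → g :=
  fun k => x ⟨if (k:ℕ) < i then k else if (k:ℕ)+1 < j then k+1 else k+2, by
    have := k.isLt; split_ifs <;> omega⟩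

lemma rest2_lt {g : Type*} {n : ℕ} (x : Fin (n+2) → g) (i : Fin (n+2)) (j : Fin (n+1))
    (h : i < i.succAbove j) : (x ∘ i.succAbove) ∘ j.succAbove = rest2 x i (i.succAbove j) := by
  funext k
  simp only [rest2, Function.comp]
  congr 1
  ext
  simp only [Fin.succAbove, Fin.lt_def] at *
  split_ifs at * <;> simp_all <;> omega

lemma rest2_gt {g : Type*} {n : ℕ} (x : Fin (n+2) → g) (i : Fin (n+2)) (j : Fin (n+1))
    (h : i.succAbove j < i) : (x ∘ i.succAbove) ∘ j.succAbove = rest2 x (i.succAbove j) i := by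
  funext k
  simp only [rest2, Function.comp]
  congr 1
  ext
  simp only [Fin.succAbove, Fin.lt_def] at *
  split_ifs at * <;> simp_all <;> omega

lemma altSum_two {g V : Type*} [AddCommGroup V] [LieRing g] {n : ℕ} (H : g → (Fin n → g) → V)
    (hH : ∀ a z, H (-a) z = - H a z) (x : Fin (n+2) → g) :
    altSum (n+2) (fun y => H ⁅y 0, y 1⁆ (fun k => y k.succ.succ)) x = 
     (-2 : ℤ) • ∑ j : Fin (n+2), ∑ i : Fin (n+2), if (i : ℕ) < (j : ℕ) then 
        ((-1 : ℤ) ^ ((i : ℕ) + (j : ℕ))) • altSum n (H ⁅x i, x j⁆) (rest2 x i j) else 0 := by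
  set U : Fin (n+2) → Fin (n+2) → V := fun i j => if (i : ℕ) < (j : ℕ) then 
        ((-1 : ℤ) ^ ((i : ℕ) + (j : ℕ))) • altSum n (H ⁅x i, x j⁆) (rest2 x i j) else 0 with hU
  have key : altSum (n+2) (fun y => H ⁅y 0, y 1⁆ (fun k => y k.succ.succ)) x = 
      ∑ i, ∑ j, (- U i j - U j i) := by
    rw [altSum_succ]
    refine Finset.sum_congr rfl fun i _ => ?_
    rw [altSum_succ, Fin.sum_univ_succAbove _ i]
    simp only [hU, lt_irrefl, if_false, neg_zero, sub_zero, zero_add, Finset.smul_sum]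
    refine Finset.sum_congr rfl fun j _ => ?_
    rw [smul_smul]
    have e1 : (fun y : Fin n → g => H ⁅(Fin.cons (x i) (Fin.cons ((x ∘ i.succAbove) j) y : Fin (n+1) → g) : Fin (n+2) → g) 0,
        (Fin.cons (x i) (Fin.cons ((x ∘ i.succAbove) j) y : Fin (n+1) → g) : Fin (n+2) → g) 1⁆
        (fun k => (Fin.cons (x i) (Fin.cons ((x ∘ i.succAbove) j) y : Fin (n+1) → g) : Fin (n+2) → g) k.succ.succ))
        = H ⁅x i, x (i.succAbove j)⁆ := by
      funext y
      rw [← Fin.succ_zero_eq_one]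
      simp only [Fin.cons_succ, Fin.cons_zero, Function.comp]
    rw [e1]
    rcases lt_or_gt_of_ne (Fin.succAbove_ne i j) with h | h
    · have h' : ((i.succAbove j : Fin (n+2)) : ℕ) < i := h
      rw [rest2_gt x i j h, if_neg (by omega), if_pos h']
      have e2 : ((i.succAbove j : Fin (n+2)) : ℕ) = j := by
        simp only [Fin.succAbove, Fin.lt_def] at *
        split_ifs at * <;> simp_all
        omega
      rw [← lie_skew]
      have : H (-⁅x (i.succAbove j), x i⁆) = fun z => - H ⁅x (i.succAbove j), x i⁆ z := by
        funext z; exact hH _ _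
      rw [this]
      simp only [altSum, e2, smul_neg, Finset.sum_neg_distrib, pow_add]
      rw [mul_comm]; simp
    · have h' : (i : ℕ) < ((i.succAbove j : Fin (n+2)) : ℕ) := h
      rw [rest2_lt x i j h, if_pos h', if_neg (by omega)]
      have e2 : ((i.succAbove j : Fin (n+2)) : ℕ) = j + 1 := by
        simp only [Fin.succAbove, Fin.lt_def] at *
        split_ifs at * <;> simp_all
        omega
      simp only [e2, pow_add, pow_one]
      simp
  rw [key]
  simp only [Finset.sum_sub_distrib, Finset.sum_neg_distrib]
  rw [Finset.sum_comm]
  rw [neg_smul, two_smul]; abel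

lemma sum_fin_two_mul {V : Type*} [AddCommGroup V] (p : ℕ) (φ : Fin (2*p) → V) :
    ∑ k, φ k = ∑ s : Fin p, (φ ⟨2 * s, by have := s.isLt; omega⟩ + 
      φ ⟨2 * s + 1, by have := s.isLt; omega⟩) := by
  induction p with
  | zero => simp
  | succ p ih =>
    have := Fin.sum_univ_castSucc (n := 2*p+1) φ
    refine this.trans ?_
    rw [Fin.sum_univ_castSucc, Fin.sum_univ_castSucc]
    have := ih (fun k => φ (k.castSucc.castSucc))
    rw [this, add_assoc]
    rfl

lemma ins_lt {g : Type*} {n : ℕ} (a : g) (z : Fin n → g) (k m : Fin (n+1)) (h : (m:ℕ) < k) :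
    Fin.insertNth (α := fun _ => g) k a z m = z ⟨m, by have := k.isLt; omega⟩ := by
  have : m = k.succAbove ⟨m, by have := k.isLt; omega⟩ := by
    rw [Fin.succAbove_of_castSucc_lt]
    · ext; simp
    · exact h
  conv_lhs => rw [this, Fin.insertNth_apply_succAbove]

lemma ins_gt {g : Type*} {n : ℕ} (a : g) (z : Fin n → g) (k m : Fin (n+1)) (h : (k:ℕ) < m) :
    Fin.insertNth (α := fun _ => g) k a z m = z ⟨m - 1, by have := m.isLt; omega⟩ := by
  have : m = k.succAbove ⟨m - 1, by have := m.isLt; omega⟩ := by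
    rw [Fin.succAbove_of_le_castSucc]
    · ext; simp; omega
    · rw [Fin.le_def]; simp; omega
  conv_lhs => rw [this, Fin.insertNth_apply_succAbove]

def slotP {g N : Type*} {p : ℕ} (R : g → g → N) (s : Fin p) (x : Fin (2*p+1) → g) : Fin p → N :=
  fun t => R (x ⟨if (t:ℕ) < s then 2*t+2 else 2*t+1, by
      have := t.isLt; have := s.isLt; split_ifs <;> omega⟩)
    (x ⟨if (t:ℕ) < s then 2*t+3 else 2*t+2, by
      have := t.isLt; have := s.isLt; split_ifs <;> omega⟩)

def slotF {g N V : Type*} {p : ℕ} (f : (Fin p → N) → V) (R : g → g → N) (s : Fin p)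
    (C : g → g → g → N) (x : Fin (2*p+1) → g) : V :=
  f (Function.update (slotP R s x) s (C (x ⟨0, by omega⟩) (x ⟨1, by have := s.isLt; omega⟩)
    (x ⟨2*s+2, by have := s.isLt; omega⟩)))

lemma slotF_cyc {K g N V : Type*} [Field K] [CharZero K] [AddCommGroup V] [Module K V]
    [AddCommGroup N] [Module K N] {p : ℕ}
    (f : MultilinearMap K (fun _ : Fin p => N) V) (R : g → g → N) (s : Fin p)
    (C : g → g → g → N) (hC : ∀ a b c, C a b c + C b c a + C c a b = 0) (x : Fin (2*p+1) → g) :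
    altSum (2*p+1) (slotF f R s C) x = 0 := by
  have hs := s.isLt
  let i0 : Fin (2*p+1) := ⟨0, by omega⟩
  let i1 : Fin (2*p+1) := ⟨1, by omega⟩
  let i2 : Fin (2*p+1) := ⟨2*s+2, by omega⟩
  have h01 : i0 ≠ i1 := by simp [i0, i1]
  have h02 : i0 ≠ i2 := by simp [i0, i2]
  have h12 : i1 ≠ i2 := by simp [i1, i2]
  let c : Equiv.Perm (Fin (2*p+1)) := Equiv.swap i0 i1 * Equiv.swap i1 i2
  have c0 : c i0 = i1 := by
    simp [c, Equiv.swap_apply_of_ne_of_ne h01 h02]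
  have c1 : c i1 = i2 := by
    simp [c, Equiv.swap_apply_of_ne_of_ne h02.symm h12.symm]
  have c2 : c i2 = i0 := by
    simp [c]
  have cn : ∀ k, k ≠ i0 → k ≠ i1 → k ≠ i2 → c k = k := by
    intro k h0 h1 h2
    simp [c, Equiv.swap_apply_of_ne_of_ne, *]
  have cs : Equiv.Perm.sign c = 1 := by
    simp [c, Equiv.Perm.sign_swap, h01, h12]
  have hF : ∀ C' (y : Fin (2*p+1) → g), slotF f R s C' y
      = f (Function.update (slotP R s y) s (C' (y i0) (y i1) (y i2))) := fun _ _ => rfl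
  have hP : ∀ (y : Fin (2*p+1) → g) (a : N), Function.update (slotP R s (y ∘ c)) s a =
      Function.update (slotP R s y) s a := by
    intro y a
    funext t
    by_cases h : t = s
    · subst h; simp
    · rw [Function.update_of_ne h, Function.update_of_ne h]
      have h' : (t:ℕ) ≠ s := fun e => h (Fin.ext e)
      simp only [slotP, Function.comp]
      rw [cn, cn] <;>
      · intro hh
        have hh' := congrArg Fin.val hh
        simp only [i0, i1, i2] at hh'
        split_ifs at hh' <;> omega
  have e1 := altSum_perm (slotF f R s C) x c
  have e2 := altSum_perm (fun y => slotF f R s C (y ∘ c)) x c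
  rw [e1] at e2
  simp only [cs, Units.val_one, one_smul] at e1 e2
  have e3 : altSum (2*p+1) (slotF f R s C) x + altSum (2*p+1) (fun y => slotF f R s C (y ∘ c)) x
      + altSum (2*p+1) (fun y => slotF f R s C ((y ∘ c) ∘ c)) x = 0 := by
    simp only [altSum, ← Finset.sum_add_distrib, ← smul_add]
    refine Finset.sum_eq_zero fun τ _ => ?_
    rw [hF, hF, hF, hP, hP, hP, ← MultilinearMap.map_update_add, ← MultilinearMap.map_update_add]
    simp only [Function.comp, c0, c1, c2, hC]
    rw [MultilinearMap.map_update_zero, smul_zero]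
  rw [e1, e2] at e3
  have e4 : (3 : K) • altSum (2*p+1) (slotF f R s C) x = 0 := by
    rw [← e3]; module
  exact (smul_eq_zero.mp e4).resolve_left (by norm_num)

/-- the A-part -/
lemma partA {g N V : Type*} [AddCommGroup V] {p : ℕ} (f : (Fin p → N) → V) (R : g → g → N)
    (D : g → N → N) (s : Fin p) (x : Fin (2*p+1) → g) :
    altSum (2*p+1) (fun y => f (Function.update (fun t : Fin p =>
        R (y (Fin.succ ⟨2*t, by have := t.isLt; omega⟩))
          (y (Fin.succ ⟨2*t+1, by have := t.isLt; omega⟩))) s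
        (D (y 0) (R (y (Fin.succ ⟨2*s, by have := s.isLt; omega⟩))
          (y (Fin.succ ⟨2*s+1, by have := s.isLt; omega⟩)))))) x =
    altSum (2*p+1) (slotF f R s (fun a b c => D a (R b c))) x := by
  have hs := s.isLt
  let k : Fin (2*p) := ⟨2*s, by omega⟩
  have e := altSum_perm (fun y => f (Function.update (fun t : Fin p =>
        R (y (Fin.succ ⟨2*t, by have := t.isLt; omega⟩))
          (y (Fin.succ ⟨2*t+1, by have := t.isLt; omega⟩))) s
        (D (y 0) (R (y (Fin.succ ⟨2*s, by have := s.isLt; omega⟩))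
          (y (Fin.succ ⟨2*s+1, by have := s.isLt; omega⟩)))))) x (extP (Fin.cycleRange k))
  rw [extP_sign, Fin.sign_cycleRange] at e
  simp only [k, pow_mul] at e
  simp only [even_two, Even.neg_pow, one_pow, Units.val_one, one_smul] at e
  rw [← e]
  congr 1
  funext y
  simp only [slotF, Function.comp, extP_succ, extP_zero]
  have lt : ∀ m (h : m < 2 * p) (_ : m < 2 * s), Fin.cycleRange k ⟨m, h⟩ = ⟨m+1, by omega⟩ := by
    intro m h h'
    ext
    rw [Fin.coe_cycleRange_of_lt]
    exact h'
  have gt : ∀ m (h : m < 2 * p), 2 * s < m → Fin.cycleRange k ⟨m, h⟩ = ⟨m, by omega⟩ := by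
    intro m h h'
    rw [Fin.cycleRange_of_gt]
    exact h'
  have eq : Fin.cycleRange k ⟨2*s, by omega⟩ = ⟨0, by omega⟩ := by
    haveI : NeZero (2*p) := ⟨by omega⟩
    rw [Fin.cycleRange_of_eq rfl]; rfl
  congr 1
  funext t
  by_cases h : t = s
  · subst h
    simp only [Function.update_self]
    rw [eq, gt _ _ (by omega)]
    rfl
  · rw [Function.update_of_ne h, Function.update_of_ne h]
    have h' : (t:ℕ) ≠ s := fun e => h (Fin.ext e)
    simp only [slotP]
    have ht := t.isLt
    rcases lt_or_gt_of_ne h' with h1 | h1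
    · rw [lt _ _ (by omega), lt _ _ (by omega)]
      simp only [h1, if_true, Fin.succ_mk]
    · rw [gt _ _ (by omega), gt _ _ (by omega)]
      simp only [if_neg (not_lt.mpr h1.le), Fin.succ_mk]

lemma partB0 {g N V : Type*} [LieRing g] {q : ℕ} (f : (Fin (q+1) → N) → V)
    (R : g → g → N) (s : Fin (q+1)) (y : Fin (2*q+3) → g) :
    f (fun t => 
      R (Fin.insertNth (α := fun _ => g) (n := 2*q+1) ⟨2*s, by have := s.isLt; omega⟩ ⁅y 0, y 1⁆
          (fun k => y k.succ.succ) ⟨2*t, by have := t.isLt; omega⟩)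
        (Fin.insertNth (α := fun _ => g) (n := 2*q+1) ⟨2*s, by have := s.isLt; omega⟩ ⁅y 0, y 1⁆
          (fun k => y k.succ.succ) ⟨2*t+1, by have := t.isLt; omega⟩)) = 
    slotF f R s (fun a b c => R ⁅a, b⁆ c) y := by
  have hs := s.isLt
  unfold slotF
  congr 1
  funext t
  have ht := t.isLt
  by_cases h : t = s
  · subst h
    simp only [Function.update_self]
    rw [Fin.insertNth_apply_same, ins_gt _ _ _ _ (by simp)]
    rfl
  · rw [Function.update_of_ne h]
    have h' : (t:ℕ) ≠ s := fun e => h (Fin.ext e)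
    simp only [slotP]
    rcases lt_or_gt_of_ne h' with h1 | h1
    · rw [ins_lt _ _ _ _ (by simp; omega), ins_lt _ _ _ _ (by simp; omega)]
      simp only [h1, if_true, Fin.succ_mk]
    · rw [ins_gt _ _ _ _ (by simp; omega), ins_gt _ _ _ _ (by simp; omega)]
      simp only [if_neg (not_lt.mpr h1.le), Fin.succ_mk]
      congr 3 <;> omega

lemma partB1 {g N V : Type*} [LieRing g] {q : ℕ} (f : (Fin (q+1) → N) → V)
    (R : g → g → N) (s : Fin (q+1)) (y : Fin (2*q+3) → g) :
    f (fun t => 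
      R (Fin.insertNth (α := fun _ => g) (n := 2*q+1) ⟨2*s+1, by have := s.isLt; omega⟩ ⁅y 0, y 1⁆
          (fun k => y k.succ.succ) ⟨2*t, by have := t.isLt; omega⟩)
        (Fin.insertNth (α := fun _ => g) (n := 2*q+1) ⟨2*s+1, by have := s.isLt; omega⟩ ⁅y 0, y 1⁆
          (fun k => y k.succ.succ) ⟨2*t+1, by have := t.isLt; omega⟩)) = 
    slotF f R s (fun a b c => R c ⁅a, b⁆) y := by
  have hs := s.isLt
  unfold slotF
  congr 1
  funext t
  have ht := t.isLt
  by_cases h : t = s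
  · subst h
    simp only [Function.update_self]
    rw [Fin.insertNth_apply_same, ins_lt _ _ _ _ (by simp)]
    rfl
  · rw [Function.update_of_ne h]
    have h' : (t:ℕ) ≠ s := fun e => h (Fin.ext e)
    simp only [slotP]
    rcases lt_or_gt_of_ne h' with h1 | h1
    · rw [ins_lt _ _ _ _ (by simp; omega), ins_lt _ _ _ _ (by simp; omega)]
      simp only [h1, if_true, Fin.succ_mk]
    · rw [ins_gt _ _ _ _ (by simp; omega), ins_gt _ _ _ _ (by simp; omega)]
      simp only [if_neg (not_lt.mpr h1.le), Fin.succ_mk]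
      congr 3 <;> omega

lemma map_neg_slot {K N V : Type*} [Field K] [AddCommGroup V] [Module K V]
    [AddCommGroup N] [Module K N] {p : ℕ} (f : MultilinearMap K (fun _ : Fin p => N) V)
    (s : Fin p) (w w' : Fin p → N) (h : ∀ t, t ≠ s → w t = w' t) (hs : w s = - w' s) :
    f w = - f w' := by
  have : w = Function.update w' s (-(w' s)) := by
    funext t
    by_cases ht : t = s
    · subst ht; simp [hs]
    · simp [ht, h]
  rw [this, ← neg_one_smul K, MultilinearMap.map_update_smul, neg_one_smul,
    Function.update_eq_self]

lemma ins_ne {g : Type*} {n : ℕ} (a b : g) (z : Fin n → g) (k m : Fin (n+1)) (h : (m:ℕ) ≠ k) :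
    Fin.insertNth (α := fun _ => g) k a z m = Fin.insertNth (α := fun _ => g) k b z m := by
  rcases lt_or_gt_of_ne h with h | h
  · rw [ins_lt _ _ _ _ h, ins_lt _ _ _ _ h]
  · rw [ins_gt _ _ _ _ h, ins_gt _ _ _ _ h]

lemma partB {K g N V : Type*} [Field K] [CharZero K] [AddCommGroup V] [Module K V]
    [AddCommGroup N] [Module K N] [LieRing g] {q : ℕ}
    (f : MultilinearMap K (fun _ : Fin (q+1) => N) V) (R : g → g → N)
    (hR : ∀ a b, R a b = - R b a) (hR' : ∀ a b, R (-a) b = - R a b)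
    (x : Fin (2*q+3) → g) :
    (∑ j : Fin (2*q+3), ∑ i : Fin (2*q+3), if (i : ℕ) < (j : ℕ) then 
        ((-1 : ℤ) ^ ((i : ℕ) + (j : ℕ))) • altSum (2*q+2) (fun y => f (fun t : Fin (q+1) => 
          R (y ⟨2*t, by have := t.isLt; omega⟩) (y ⟨2*t+1, by have := t.isLt; omega⟩)))
          (Fin.cons ⁅x i, x j⁆ (rest2 x i j)) else 0)
    = - ∑ s, altSum (2*q+3) (slotF f R s (fun a b c => R ⁅a, b⁆ c)) x := by
  have hn : ∀ s (y : Fin (2*q+3) → g), slotF f R s (fun a b c => R c ⁅a, b⁆) y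
      = - slotF f R s (fun a b c => R ⁅a, b⁆ c) y := by
    intro s y
    unfold slotF
    simp only []
    rw [hR (y _) ⁅_, _⁆, ← neg_one_smul K, MultilinearMap.map_update_smul, neg_one_smul]
  let F : (Fin (2*q+2) → g) → V := fun y => f (fun t : Fin (q+1) => 
          R (y ⟨2*t, by have := t.isLt; omega⟩) (y ⟨2*t+1, by have := t.isLt; omega⟩))
  have hF0 : ∀ s : Fin (q+1), ∀ y : Fin (2*q+3) → g, F (Fin.insertNth (α := fun _ => g) (n := 2*q+1)
     ⟨2*s, by have := s.isLt; omega⟩ ⁅y 0, y 1⁆ (fun k => y k.succ.succ))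
     = slotF f R s (fun a b c => R ⁅a, b⁆ c) y := fun s y => partB0 f R s y
  have hF1 : ∀ s : Fin (q+1), ∀ y : Fin (2*q+3) → g, F (Fin.insertNth (α := fun _ => g) (n := 2*q+1)
     ⟨2*s+1, by have := s.isLt; omega⟩ ⁅y 0, y 1⁆ (fun k => y k.succ.succ))
     = - slotF f R s (fun a b c => R ⁅a, b⁆ c) y := fun s y => (partB1 f R s y).trans (hn s y)
  have hodd : ∀ (k : Fin (2*q+2)) (a : g) (z : Fin (2*q+1) → g),
      F (Fin.insertNth (α := fun _ => g) k (-a) z) = - F (Fin.insertNth (α := fun _ => g) k a z) := by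
    intro k a z
    have hk := k.isLt
    refine map_neg_slot f ⟨(k : ℕ) / 2, by omega⟩ _ _ ?_ ?_
    · intro t ht
      have ht' : (t : ℕ) ≠ (k : ℕ) / 2 := fun e => ht (Fin.ext e)
      rw [ins_ne (-a) a, ins_ne (-a) a] <;> simp only [] <;> omega
    · rcases Nat.mod_two_eq_zero_or_one k with h | h
      · have : (⟨2 * ((k : ℕ) / 2), by omega⟩ : Fin (2*q+2)) = k := Fin.ext (by simp only []; omega)
        rw [this, Fin.insertNth_apply_same, Fin.insertNth_apply_same, hR', ins_ne (-a) a]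
        simp only []; omega
      · have : (⟨2 * ((k : ℕ) / 2) + 1, by omega⟩ : Fin (2*q+2)) = k :=
          Fin.ext (by simp only []; omega)
        rw [this, Fin.insertNth_apply_same, Fin.insertNth_apply_same, hR, hR', hR _ a,
          ins_ne (-a) a]
        simp only []; omega
  change (∑ j : Fin (2*q+3), ∑ i : Fin (2*q+3), if (i : ℕ) < (j : ℕ) then 
        ((-1 : ℤ) ^ ((i : ℕ) + (j : ℕ))) • altSum (2*q+2) F
          (Fin.cons ⁅x i, x j⁆ (rest2 x i j)) else 0) = _
  set X := (∑ j : Fin (2*q+3), ∑ i : Fin (2*q+3), if (i : ℕ) < (j : ℕ) then 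
        ((-1 : ℤ) ^ ((i : ℕ) + (j : ℕ))) • altSum (2*q+2) F
          (Fin.cons ⁅x i, x j⁆ (rest2 x i j)) else 0) with hX
  have e1 : (-2 : ℤ) • X = ∑ k : Fin (2*q+2), ((-1 : ℤ) ^ (k : ℕ)) •
      altSum (2*q+3) (fun y => F (Fin.insertNth (α := fun _ => g) (n := 2*q+1) k
        ⁅y 0, y 1⁆ (fun k => y k.succ.succ))) x := by
    have : ∀ k : Fin (2*q+2), altSum (2*q+3) (fun y => F (Fin.insertNth (α := fun _ => g)
        (n := 2*q+1) k ⁅y 0, y 1⁆ (fun k => y k.succ.succ))) x = _ := fun k =>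
      altSum_two (fun a z => F (Fin.insertNth (α := fun _ => g) (n := 2*q+1) k a z)) (hodd k) x
    simp only [this]
    simp only [smul_comm _ (-2 : ℤ)]
    rw [← Finset.smul_sum]
    congr 1
    simp only [Finset.smul_sum]
    rw [Finset.sum_comm, hX]
    refine Finset.sum_congr rfl fun j _ => ?_
    rw [Finset.sum_comm]
    refine Finset.sum_congr rfl fun i _ => ?_
    by_cases h : (i : ℕ) < j
    · simp only [h, if_true]
      rw [altSum_cons, Finset.smul_sum]
      refine Finset.sum_congr rfl fun k _ => ?_
      rw [smul_comm]
    · simp [h]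
  have e2 : (-2 : ℤ) • X = (2 : ℤ) • ∑ s, altSum (2*q+3) (slotF f R s (fun a b c => R ⁅a, b⁆ c)) x := by
    rw [e1]
    have := sum_fin_two_mul (q+1) (fun k => ((-1 : ℤ) ^ (k : ℕ)) •
      altSum (2*q+3) (fun y => F (Fin.insertNth (α := fun _ => g) (n := 2*q+1) k
        ⁅y 0, y 1⁆ (fun k => y k.succ.succ))) x)
    refine this.trans ?_
    simp only [hF0, hF1]
    rw [Finset.smul_sum]
    refine Finset.sum_congr rfl fun s _ => ?_
    have p0 : (-1 : ℤ) ^ (2 * (s : ℕ)) = 1 := by rw [pow_mul]; simp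
    have p1 : (-1 : ℤ) ^ (2 * (s : ℕ) + 1) = -1 := by rw [pow_succ, p0]; simp
    rw [p0, p1]
    simp only [altSum, smul_neg, Finset.sum_neg_distrib, one_smul, neg_smul, neg_neg]
    rw [two_smul]
  have e3 : (2 : K) • (X + ∑ s, altSum (2*q+3) (slotF f R s (fun a b c => R ⁅a, b⁆ c)) x) = 0 := by
    rw [neg_smul, two_smul, two_smul] at e2
    rw [two_smul, add_add_add_comm, ← e2]; abel
  exact eq_neg_of_add_eq_zero_left ((smul_eq_zero.mp e3).resolve_left (by norm_num))

/-- **The Chern–Weil cochain is a cocycle** (part of Lecomte's theorem): for a surjective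
morphism `π : gh → g` of Lie algebras over a field of characteristic zero, a linear
section `σ` of `π` and a symmetric `gh`-invariant `p`-linear map `f : (ker π)^p → V`,
the `2p`-cochain `f_σ` satisfies `d_g f_σ = 0`. -/
theorem chernWeil_is_cocycle {K g gh V : Type*} [Field K] [CharZero K]
    [LieRing g] [LieAlgebra K g] [LieRing gh] [LieAlgebra K gh]
    [AddCommGroup V] [Module K V] [LieRingModule g V] [LieModule K g V]
    (π : gh →ₗ⁅K⁆ g) (hπ : Function.Surjective π)
    (σ : g →ₗ[K] gh) (hσ : ∀ x, π (σ x) = x)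
    (p : ℕ) (f : MultilinearMap K (fun _ : Fin p => π.ker) V)
    (hsym : ∀ (y : Fin p → π.ker) (τ : Equiv.Perm (Fin p)), f (fun i => y (τ i)) = f y)
    (hinv : ∀ (x : gh) (y : Fin p → π.ker),
      ⁅π x, f y⁆ = ∑ i : Fin p, f (Function.update y i ⁅x, y i⁆)) :
    ceDiff (2 * p) (chernWeil π p (2 * p) rfl σ hσ f) = 0 := by
  rcases p with _ | q
  · funext x
    have h0 : ∀ (z : g) (y : Fin 0 → π.ker), ⁅z, f y⁆ = 0 := by
      intro z y
      have := hinv (σ z) y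
      rw [hσ] at this
      simpa using this
    simp only [ceDiff, chernWeil, lie_smul, lie_sum, lie_zsmul, h0]
    simp
  funext x
  let R := curvKer π σ hσ
  have hR : ∀ a b, R a b = - R b a := by
    intro a b
    apply Subtype.ext
    simp only [R, curvKer, LieSubmodule.coe_neg]
    rw [← lie_skew (σ a), ← lie_skew a, map_neg]; abel
  have hR' : ∀ a b, R (-a) b = - R a b := by
    intro a b
    apply Subtype.ext
    simp only [R, curvKer, LieSubmodule.coe_neg, map_neg, neg_lie]; abel
  let F : (Fin (2*q+2) → g) → V := fun y => f (fun t : Fin (q+1) => 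
          R (y ⟨2*t, by have := t.isLt; omega⟩) (y ⟨2*t+1, by have := t.isLt; omega⟩))
  have hcw : chernWeil π (q+1) (2*(q+1)) rfl σ hσ f =
    fun x => ((2 : K) ^ (q+1))⁻¹ • altSum (2*q+2) F x := rfl
  have hA : (∑ j : Fin (2*q+3), ((-1 : ℤ) ^ (j : ℕ)) • ⁅x j, altSum (2*q+2) F (x ∘ j.succAbove)⁆)
      = ∑ s, altSum (2*q+3) (slotF f R s (fun a b c => ⁅σ a, R b c⁆)) x := by
    have e1 : altSum (2*q+3) (fun y => ⁅y 0, F (fun k => y k.succ)⁆) x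
      = (∑ j : Fin (2*q+3), ((-1 : ℤ) ^ (j : ℕ)) • ⁅x j, altSum (2*q+2) F (x ∘ j.succAbove)⁆) := by
      rw [altSum_succ]
      simp only [Fin.cons_zero, Fin.cons_succ]
      simp only [altSum, lie_sum, lie_zsmul]
    rw [← e1]
    have e2 : ∀ s, altSum (2*q+3) (slotF f R s (fun a b c => ⁅σ a, R b c⁆)) x = _ :=
      fun s => (partA (p := q+1) f R (fun a n => ⁅σ a, n⁆) s x).symm
    simp only [e2]
    simp only [altSum]
    rw [Finset.sum_comm]
    refine Finset.sum_congr rfl fun τ _ => ?_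
    rw [← Finset.smul_sum]
    congr 1
    have := hinv (σ ((x ∘ τ) 0)) (fun t : Fin (q+1) =>
        R ((x ∘ τ) (Fin.succ ⟨2*t, by have := t.isLt; omega⟩))
          ((x ∘ τ) (Fin.succ ⟨2*t+1, by have := t.isLt; omega⟩)))
    rw [hσ] at this
    exact this
  have hB := partB f R hR hR' x
  have hbian : ∀ s, altSum (2*q+3) (slotF f R s (fun a b c => ⁅σ a, R b c⁆)) x
      - altSum (2*q+3) (slotF f R s (fun a b c => R ⁅a, b⁆ c)) x = 0 := by
    intro s
    have h := slotF_cyc f R s (fun a b c => ⁅σ a, R b c⁆ - R ⁅a, b⁆ c) (by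
      intro a b c
      apply Subtype.ext
      simp only [R, curvKer, LieSubmodule.coe_add, LieSubmodule.coe_sub, LieSubmodule.coe_bracket,
        LieSubmodule.coe_zero, lie_sub]
      have j1 := lie_jacobi (σ a) (σ b) (σ c)
      have j2 := congrArg σ (lie_jacobi a b c)
      simp only [map_add, map_zero] at j2
      rw [← lie_skew (σ ⁅a, b⁆), ← lie_skew (σ ⁅b, c⁆), ← lie_skew (σ ⁅c, a⁆), ← lie_skew ⁅a, b⁆,
        ← lie_skew ⁅b, c⁆, ← lie_skew ⁅c, a⁆]
      simp only [map_neg]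
      have : (0 : gh) = 0 - 0 := by simp
      rw [this]
      nth_rewrite 1 [← j1]
      rw [← j2]
      abel) x
    rw [← h]
    simp only [altSum]
    rw [← Finset.sum_sub_distrib]
    refine Finset.sum_congr rfl fun τ _ => ?_
    rw [← smul_sub]
    congr 1
    simp only [slotF]
    rw [MultilinearMap.map_update_sub]
  rw [hcw]
  have hsum : ceDiff (2*q+2) (fun x => ((2 : K) ^ (q+1))⁻¹ • altSum (2*q+2) F x) x =
      ((2 : K) ^ (q+1))⁻¹ • ((∑ j : Fin (2*q+3), ((-1 : ℤ) ^ (j : ℕ)) •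
        ⁅x j, altSum (2*q+2) F (x ∘ j.succAbove)⁆) + 
      (∑ j : Fin (2*q+3), ∑ i : Fin (2*q+3), if (i : ℕ) < (j : ℕ) then 
        ((-1 : ℤ) ^ ((i : ℕ) + (j : ℕ))) • altSum (2*q+2) F
          (Fin.cons ⁅x i, x j⁆ (rest2 x i j)) else 0)) := by
    unfold ceDiff
    simp only [smul_add, Finset.smul_sum, lie_smul]
    congr 1
    · refine Finset.sum_congr rfl fun j _ => ?_
      rw [smul_comm]
    · refine Finset.sum_congr rfl fun j _ => Finset.sum_congr rfl fun i _ => ?_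
      split_ifs with h
      · rw [smul_comm]
        congr 3
        funext k
        refine Fin.cases ?_ (fun k => ?_) k
        · simp
        · simp [rest2]
      · simp
  refine hsum.trans ?_
  rw [hA]
  change _ • (_ + _) = (0 : V)
  erw [hB]
  rw [← sub_eq_add_neg, ← Finset.sum_sub_distrib]
  simp [hbian]
end

section
/- Let K be a field of characteristic zero, let q : ĝ → g be a surjective homomorphism of Lie algebras over K with kernel n, let V be a K-vector space equipped with a bilinear map m_V : V × V → V, and let σ : g → ĝ be a linear section of q. Then for every symmetric p-linear map f : n^p → V and every symmetric q-linear map h : n^q → V one has (1/(p+q)!) · (f ∨_{m_V} h)_σ = ((1/p!) · f_σ) ∧_{m_V} ((1/q!) · h_σ); equivalently, (f ∨_{m_V} h)_σ = ((p+q)!/(p!·q!)) · (f_σ ∧_{m_V} h_σ). In particular the Chern–Weil map f ↦ (1/p!)[f_σ] is multiplicative (the cochain-level form of part (b) of Lecomte's theorem). -/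
open scoped BigOperators

/-- The wedge product of `V`-valued cochains relative to a multiplication `m` on `V`.
The total arity `a` is passed together with a proof `a = p + q`. -/
noncomputable def wedgeC {K g V : Type*} [Field K] [AddCommGroup V] [Module K V]
    (p q a : ℕ) (ha : a = p + q) (m : V → V → V)
    (α : (Fin p → g) → V) (β : (Fin q → g) → V) :
    (Fin a → g) → V :=
  fun x => (((p.factorial * q.factorial : ℕ) : K))⁻¹ •
    ∑ τ : Equiv.Perm (Fin a),
      ((Equiv.Perm.sign τ : ℤ)) •
        m (α (fun s : Fin p => x (τ ⟨(s : ℕ), by have := s.isLt; omega⟩)))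
          (β (fun s : Fin q => x (τ ⟨p + (s : ℕ), by have := s.isLt; omega⟩)))

/-- The symmetric product `(f ∨_m h)(y₁,…,y_{p+q}) = (1/(p!q!)) Σ_{τ ∈ S_{p+q}}
m(f(y_{τ(1)},…,y_{τ(p)}), h(y_{τ(p+1)},…,y_{τ(p+q)}))` of symmetric multilinear maps. -/
noncomputable def veeC {K N V : Type*} [Field K] [AddCommGroup V] [Module K V]
    (p q : ℕ) (m : V → V → V)
    (f : (Fin p → N) → V) (h : (Fin q → N) → V) :
    (Fin (p + q) → N) → V :=
  fun y => (((p.factorial * q.factorial : ℕ) : K))⁻¹ •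
    ∑ τ : Equiv.Perm (Fin (p + q)),
      m (f (fun s : Fin p => y (τ ⟨(s : ℕ), by have := s.isLt; omega⟩)))
        (h (fun s : Fin q => y (τ ⟨p + (s : ℕ), by have := s.isLt; omega⟩)))

/-- The Chern–Weil cochain attached to a `p`-linear map `f : n^p → V` and a linear
section `σ` of `π`.  The arity `a` is passed along with a proof `a = 2*p`. -/
noncomputable def chernWeilF {K g gh V : Type*} [Field K] [LieRing g] [LieAlgebra K g]
    [LieRing gh] [LieAlgebra K gh] [AddCommGroup V] [Module K V]
    (π : gh →ₗ⁅K⁆ g) (p a : ℕ) (ha : a = 2 * p)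
    (σ : g →ₗ[K] gh) (hσ : ∀ x, π (σ x) = x)
    (f : (Fin p → π.ker) → V) :
    (Fin a → g) → V :=
  fun x => ((2 : K) ^ p)⁻¹ •
    ∑ τ : Equiv.Perm (Fin a),
      ((Equiv.Perm.sign τ : ℤ)) •
        f (fun s : Fin p =>
          curvKer π σ hσ
            (x (τ ⟨2 * (s : ℕ), by have := s.isLt; omega⟩))
            (x (τ ⟨2 * (s : ℕ) + 1, by have := s.isLt; omega⟩)))

theorem cwAux_block (n a : ℕ) (ha : a = 2 * n) (ρ : Equiv.Perm (Fin n)) :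
    ∃ c : Equiv.Perm (Fin a), Equiv.Perm.sign c = 1 ∧
      (∀ s : Fin n, c ⟨2 * (s : ℕ), by have := s.isLt; omega⟩
        = ⟨2 * (ρ s : ℕ), by have := (ρ s).isLt; omega⟩) ∧
      (∀ s : Fin n, c ⟨2 * (s : ℕ) + 1, by have := s.isLt; omega⟩
        = ⟨2 * (ρ s : ℕ) + 1, by have := (ρ s).isLt; omega⟩) := by
  have ha' : n * 2 = a := by omega
  subst ha'
  refine ⟨finProdFinEquiv.permCongr (Equiv.prodCongrLeft (fun _ : Fin 2 => ρ)), ?_, ?_, ?_⟩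
  · rw [Equiv.Perm.sign_permCongr, Equiv.Perm.sign_prodCongrLeft]
    simp
  · intro s
    have h1 : (⟨2 * (s : ℕ), by have := s.isLt; omega⟩ : Fin (n * 2))
        = finProdFinEquiv (s, (0 : Fin 2)) := by
      ext; simp
    rw [h1, Equiv.permCongr_apply, Equiv.symm_apply_apply]
    ext; simp
  · intro s
    have h1 : (⟨2 * (s : ℕ) + 1, by have := s.isLt; omega⟩ : Fin (n * 2))
        = finProdFinEquiv (s, (1 : Fin 2)) := by
      ext; simp [add_comm]
    rw [h1, Equiv.permCongr_apply, Equiv.symm_apply_apply]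
    ext; simp [add_comm]

theorem cwAux_sum (m n : ℕ) (a : Equiv.Perm (Fin m)) (b : Equiv.Perm (Fin n)) :
    ∃ c : Equiv.Perm (Fin (m + n)),
      Equiv.Perm.sign c = Equiv.Perm.sign a * Equiv.Perm.sign b ∧
      (∀ s : Fin m, c ⟨(s : ℕ), by have := s.isLt; omega⟩
        = ⟨(a s : ℕ), by have := (a s).isLt; omega⟩) ∧
      (∀ s : Fin n, c ⟨m + (s : ℕ), by have := s.isLt; omega⟩
        = ⟨m + (b s : ℕ), by have := (b s).isLt; omega⟩) := by
  refine ⟨finSumFinEquiv.permCongr (Equiv.sumCongr a b), ?_, ?_, ?_⟩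
  · rw [Equiv.Perm.sign_permCongr]
    exact Equiv.Perm.sign_sumCongr a b
  · intro s
    have h1 : (⟨(s : ℕ), by have := s.isLt; omega⟩ : Fin (m + n))
        = finSumFinEquiv (Sum.inl s) := by
      ext; simp
    rw [h1, Equiv.permCongr_apply, Equiv.symm_apply_apply]
    ext; simp
  · intro s
    have h1 : (⟨m + (s : ℕ), by have := s.isLt; omega⟩ : Fin (m + n))
        = finSumFinEquiv (Sum.inr s) := by
      ext; simp
    rw [h1, Equiv.permCongr_apply, Equiv.symm_apply_apply]
    ext; simp

theorem cwAux_reindex {V : Type*} [AddCommGroup V] {n : ℕ} (T : Equiv.Perm (Fin n) → V)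
    (c : Equiv.Perm (Fin n)) :
    ∑ τ : Equiv.Perm (Fin n), ((Equiv.Perm.sign τ : ℤ)) • T τ
      = ∑ τ : Equiv.Perm (Fin n),
        ((Equiv.Perm.sign τ : ℤ) * (Equiv.Perm.sign c : ℤ)) • T (τ * c) := by
  rw [← Equiv.sum_comp (Equiv.mulRight c)]
  refine Finset.sum_congr rfl fun τ _ => ?_
  simp [Equiv.Perm.sign_mul]

/-- **Multiplicativity of the Chern–Weil map** (cochain level, part (b) of Lecomte's
theorem): `(f ∨_{m_V} h)_σ = ((p+q)!/(p!·q!)) · (f_σ ∧_{m_V} h_σ)`. -/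
theorem chernWeil_multiplicative {K g gh V : Type*} [Field K] [CharZero K]
    [LieRing g] [LieAlgebra K g] [LieRing gh] [LieAlgebra K gh]
    [AddCommGroup V] [Module K V]
    (mV : V →ₗ[K] V →ₗ[K] V)
    (π : gh →ₗ⁅K⁆ g) (hπ : Function.Surjective π)
    (σ : g →ₗ[K] gh) (hσ : ∀ x, π (σ x) = x)
    (p q : ℕ)
    (f : MultilinearMap K (fun _ : Fin p => π.ker) V)
    (h : MultilinearMap K (fun _ : Fin q => π.ker) V)
    (hfsym : ∀ (y : Fin p → π.ker) (τ : Equiv.Perm (Fin p)), f (fun i => y (τ i)) = f y)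
    (hhsym : ∀ (y : Fin q → π.ker) (τ : Equiv.Perm (Fin q)), h (fun i => y (τ i)) = h y) :
    chernWeilF π (p + q) (2 * p + 2 * q) (by ring) σ hσ
        (veeC (K := K) p q (fun v w => mV v w) ⇑f ⇑h)
      = (((p + q).factorial : K) / ((p.factorial : K) * (q.factorial : K))) •
          wedgeC (K := K) (2 * p) (2 * q) (2 * p + 2 * q) rfl (fun v w => mV v w)
            (chernWeilF π p (2 * p) rfl σ hσ ⇑f)
            (chernWeilF π q (2 * q) rfl σ hσ ⇑h) := by
  funext x
  let T : Equiv.Perm (Fin (2 * p + 2 * q)) → V := fun τ =>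
    mV (f (fun s : Fin p => curvKer π σ hσ
          (x (τ ⟨2 * (s : ℕ), by have := s.isLt; omega⟩))
          (x (τ ⟨2 * (s : ℕ) + 1, by have := s.isLt; omega⟩))))
       (h (fun s : Fin q => curvKer π σ hσ
          (x (τ ⟨2 * p + 2 * (s : ℕ), by have := s.isLt; omega⟩))
          (x (τ ⟨2 * p + (2 * (s : ℕ) + 1), by have := s.isLt; omega⟩))))
  let S : V := ∑ τ : Equiv.Perm (Fin (2 * p + 2 * q)), ((Equiv.Perm.sign τ : ℤ)) • T τ
  have hp : (p.factorial : K) ≠ 0 := by exact_mod_cast p.factorial_ne_zero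
  have hq : (q.factorial : K) ≠ 0 := by exact_mod_cast q.factorial_ne_zero
  have hp2 : ((2 * p).factorial : K) ≠ 0 := by exact_mod_cast (2 * p).factorial_ne_zero
  have hq2 : ((2 * q).factorial : K) ≠ 0 := by exact_mod_cast (2 * q).factorial_ne_zero
  have hL : chernWeilF π (p + q) (2 * p + 2 * q) (by ring) σ hσ
        (veeC (K := K) p q (fun v w => mV v w) ⇑f ⇑h) x
      = (((2 : K) ^ (p + q))⁻¹ * ((p.factorial * q.factorial : ℕ) : K)⁻¹
          * ((p + q).factorial : K)) • S := by
    simp only [chernWeilF, veeC]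
    simp_rw [smul_comm _ (((p.factorial * q.factorial : ℕ) : K)⁻¹), ← Finset.smul_sum, mul_smul]
    congr 2
    simp_rw [Finset.smul_sum]
    rw [Finset.sum_comm]
    refine (Finset.sum_congr rfl (g := fun _ => S) fun ρ _ => ?_).trans ?_
    · obtain ⟨c, hc, hc0, hc1⟩ := cwAux_block (p + q) (2 * p + 2 * q) (by ring) ρ
      have := cwAux_reindex T c
      rw [hc] at this
      refine Eq.trans ?_ this.symm
      refine Finset.sum_congr rfl fun τ _ => ?_
      rw [Units.val_one, mul_one]
      congr 1
      simp only [T, Equiv.Perm.mul_apply]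
      have e0 := fun s : Fin p => hc0 ⟨s, by have := s.isLt; omega⟩
      have e1 := fun s : Fin p => hc1 ⟨s, by have := s.isLt; omega⟩
      have e2 := fun s : Fin q => hc0 ⟨p + s, by have := s.isLt; omega⟩
      have e3 := fun s : Fin q => hc1 ⟨p + s, by have := s.isLt; omega⟩
      simp only [mul_add, add_assoc] at e0 e1 e2 e3
      simp only [e0, e1, e2, e3]
    · simp [Fintype.card_perm, Nat.cast_smul_eq_nsmul]
  have hR : wedgeC (K := K) (2 * p) (2 * q) (2 * p + 2 * q) rfl (fun v w => mV v w)
            (chernWeilF π p (2 * p) rfl σ hσ ⇑f)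
            (chernWeilF π q (2 * q) rfl σ hσ ⇑h) x
      = (((2 : K) ^ (p + q))⁻¹) • S := by
    simp only [chernWeilF, wedgeC]
    have step : ∀ (a : Equiv.Perm (Fin (2 * p))) (b : Equiv.Perm (Fin (2 * q))),
        ∑ τ : Equiv.Perm (Fin (2 * p + 2 * q)), ((Equiv.Perm.sign τ : ℤ)) •
          ((Equiv.Perm.sign a : ℤ)) • ((Equiv.Perm.sign b : ℤ)) •
          mV (f (fun s : Fin p => curvKer π σ hσ
              (x (τ ⟨(a ⟨2 * (s : ℕ), by have := s.isLt; omega⟩ : ℕ), by omega⟩))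
              (x (τ ⟨(a ⟨2 * (s : ℕ) + 1, by have := s.isLt; omega⟩ : ℕ), by omega⟩))))
            (h (fun s : Fin q => curvKer π σ hσ
              (x (τ ⟨2 * p + (b ⟨2 * (s : ℕ), by have := s.isLt; omega⟩ : ℕ), by omega⟩))
              (x (τ ⟨2 * p + (b ⟨2 * (s : ℕ) + 1, by have := s.isLt; omega⟩ : ℕ), by omega⟩))))
          = S := by
      intro a b
      obtain ⟨c, hc, hc0, hc1⟩ := cwAux_sum (2 * p) (2 * q) a b
      refine Eq.trans ?_ (cwAux_reindex T c).symm
      refine Finset.sum_congr rfl fun τ _ => ?_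
      rw [hc, Units.val_mul, mul_smul, mul_smul]
      congr 3
      simp only [T, Equiv.Perm.mul_apply]
      have e0 := fun s : Fin p => hc0 ⟨2 * s, by have := s.isLt; omega⟩
      have e1 := fun s : Fin p => hc0 ⟨2 * s + 1, by have := s.isLt; omega⟩
      have e2 := fun s : Fin q => hc1 ⟨2 * s, by have := s.isLt; omega⟩
      have e3 := fun s : Fin q => hc1 ⟨2 * s + 1, by have := s.isLt; omega⟩
      simp only [] at e0 e1 e2 e3
      simp only [e0, e1, e2, e3]
    have tot := Finset.sum_congr (rfl : (Finset.univ : Finset (Equiv.Perm (Fin (2 * p)))) = _)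
      fun a _ => Finset.sum_congr (rfl : (Finset.univ : Finset (Equiv.Perm (Fin (2 * q)))) = _)
      fun b _ => step a b
    have tot2 : ∑ τ : Equiv.Perm (Fin (2 * p + 2 * q)), ((Equiv.Perm.sign τ : ℤ)) •
        ∑ a : Equiv.Perm (Fin (2 * p)), ∑ b : Equiv.Perm (Fin (2 * q)),
          ((Equiv.Perm.sign a : ℤ)) • ((Equiv.Perm.sign b : ℤ)) •
          mV (f (fun s : Fin p => curvKer π σ hσ
              (x (τ ⟨(a ⟨2 * (s : ℕ), by have := s.isLt; omega⟩ : ℕ), by omega⟩))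
              (x (τ ⟨(a ⟨2 * (s : ℕ) + 1, by have := s.isLt; omega⟩ : ℕ), by omega⟩))))
            (h (fun s : Fin q => curvKer π σ hσ
              (x (τ ⟨2 * p + (b ⟨2 * (s : ℕ), by have := s.isLt; omega⟩ : ℕ), by omega⟩))
              (x (τ ⟨2 * p + (b ⟨2 * (s : ℕ) + 1, by have := s.isLt; omega⟩ : ℕ), by omega⟩))))
          = (((2 * p).factorial * (2 * q).factorial : ℕ) : K) • S := by
      have r : ∑ a : Equiv.Perm (Fin (2 * p)), ∑ b : Equiv.Perm (Fin (2 * q)), S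
          = (((2 * p).factorial * (2 * q).factorial : ℕ) : K) • S := by
        rw [Nat.cast_smul_eq_nsmul]
        simp [Fintype.card_perm, mul_smul]
      rw [← r, ← tot]
      simp_rw [Finset.smul_sum]
      rw [Finset.sum_comm]
      refine Finset.sum_congr rfl fun a _ => ?_
      rw [Finset.sum_comm]
    have hne : (((2 * p).factorial * (2 * q).factorial : ℕ) : K) ≠ 0 := by
      push_cast; exact mul_ne_zero hp2 hq2
    rw [inv_smul_eq_iff₀ hne, smul_comm, ← tot2, Finset.smul_sum]
    refine Finset.sum_congr rfl fun τ _ => ?_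
    rw [smul_comm]
    congr 1
    rw [map_smul, map_smul, LinearMap.smul_apply, smul_smul, pow_add, mul_inv,
      mul_comm ((2 : K) ^ q)⁻¹]
    congr 1
    rw [map_sum, Finset.sum_comm]
    refine Finset.sum_congr rfl fun b _ => ?_
    rw [map_sum, LinearMap.sum_apply]
    refine Finset.sum_congr rfl fun a _ => ?_
    rw [map_zsmul, map_zsmul, LinearMap.smul_apply, smul_comm]
  rw [hL, Pi.smul_apply, hR, smul_smul]
  congr 1
  push_cast
  field_simp
end
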